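/- Let f be a spectral point of graphs and α ≤ β real numbers such that f_α is monotone under cohomomorphisms of noncommutative graphs of the form ⊕_{d=1}^r Ḡ_d ⊗ Q_d. If H is a finite simple graph, q ≥ 1 an integer, and H̄ ⊗ Q_q ≤ ⊕_{d=1}^r Ḡ_d ⊗ Q_d, then f(H)·q^β ≤ ∑_{d=1}^r f(G_d)·d^β. -/

import Mathlib

open scoped Kronecker
open Matrix

namespace NCG

/-- Existence of a cohomomorphism from `T` to `S` (written `T ≤ S`). -/
def Cohom {A B : Type} [Fintype A] [DecidableEq A] [Fintype B] [DecidableEq B]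
    (T : Submodule ℂ (Matrix B B ℂ)) (S : Submodule ℂ (Matrix A A ℂ)) : Prop :=
  ∃ (k : ℕ) (E : Fin k → Matrix A B ℂ),
    (∑ i, (E i)ᴴ * E i) = 1 ∧ ∀ i j : Fin k, ∀ M ∈ S, (E i)ᴴ * M * E j ∈ T

/-- The noncommutative graph `Ḡ` of a classical graph `G`. -/
noncomputable def graphNC {V : Type} [Fintype V] [DecidableEq V] (G : SimpleGraph V) :
    Submodule ℂ (Matrix V V ℂ) :=
  Submodule.span ℂ {M | ∃ x y : V, (G.Adj x y ∨ x = y) ∧ M = Matrix.single x y 1}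

/-- The confusability graph `Q_d = ℂ·I_d` of the noiseless `d`-dimensional quantum channel. -/
noncomputable def qGraph (d : ℕ) : Submodule ℂ (Matrix (Fin d) (Fin d) ℂ) :=
  Submodule.span ℂ {(1 : Matrix (Fin d) (Fin d) ℂ)}

/-- Tensor product of noncommutative graphs. -/
noncomputable def ncTensor {A B : Type} [Fintype A] [DecidableEq A] [Fintype B] [DecidableEq B]
    (S : Submodule ℂ (Matrix A A ℂ)) (T : Submodule ℂ (Matrix B B ℂ)) :
    Submodule ℂ (Matrix (A × B) (A × B) ℂ) :=
  Submodule.span ℂ {M | ∃ X ∈ S, ∃ Y ∈ T, M = X ⊗ₖ Y}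

/-- Direct sum of a finite family of noncommutative graphs. -/
noncomputable def ncDirectSum {ι : Type} [Fintype ι] [DecidableEq ι] {V : ι → Type}
    [∀ i, Fintype (V i)] [∀ i, DecidableEq (V i)]
    (S : ∀ i, Submodule ℂ (Matrix (V i) (V i) ℂ)) :
    Submodule ℂ (Matrix (Σ i, V i) (Σ i, V i) ℂ) where
  carrier := {M | (∀ p q : Σ i, V i, p.1 ≠ q.1 → M p q = 0) ∧
    ∀ i, (Matrix.of fun x y : V i => M ⟨i, x⟩ ⟨i, y⟩) ∈ S i}
  add_mem' := by
    rintro a b ⟨ha1, ha2⟩ ⟨hb1, hb2⟩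
    refine ⟨fun p q h => ?_, fun i => ?_⟩
    · simp [Matrix.add_apply, ha1 p q h, hb1 p q h]
    · have h := (S i).add_mem (ha2 i) (hb2 i)
      convert h using 1
      rfl
  zero_mem' := by
    refine ⟨fun p q h => rfl, fun i => ?_⟩
    have h0 : (Matrix.of fun x y : V i =>
        (0 : Matrix (Σ j, V j) (Σ j, V j) ℂ) ⟨i, x⟩ ⟨i, y⟩) = 0 := rfl
    rw [h0]
    exact (S i).zero_mem
  smul_mem' := by
    rintro c a ⟨ha1, ha2⟩
    refine ⟨fun p q h => ?_, fun i => ?_⟩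
    · simp [Matrix.smul_apply, ha1 p q h]
    · have h := (S i).smul_mem c (ha2 i)
      convert h using 1
      rfl

/-- `⊕_{d=1}^r Ḡ_d ⊗ Q_d`, where `G d` plays the role of `G_{d+1}` for `d : Fin r`. -/
noncomputable def bigSum {r : ℕ} {V : Fin r → Type} [∀ d, Fintype (V d)] [∀ d, DecidableEq (V d)]
    (G : ∀ d, SimpleGraph (V d)) :
    Submodule ℂ (Matrix (Σ d : Fin r, V d × Fin (d.1 + 1))
      (Σ d : Fin r, V d × Fin (d.1 + 1)) ℂ) :=
  ncDirectSum fun d : Fin r => ncTensor (graphNC (G d)) (qGraph (d.1 + 1))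


/-- Disjoint union of simple graphs. -/
def disjUnion {V W : Type} (G : SimpleGraph V) (H : SimpleGraph W) :
    SimpleGraph (V ⊕ W) where
  Adj a b := match a, b with
    | Sum.inl x, Sum.inl y => G.Adj x y
    | Sum.inr x, Sum.inr y => H.Adj x y
    | _, _ => False
  symm := by
    refine ⟨?_⟩
    rintro (x | x) (y | y) h
    · exact G.symm.symm _ _ h
    · exact h.elim
    · exact h.elim
    · exact H.symm.symm _ _ h
  loopless := by
    refine ⟨?_⟩
    rintro (x | x) h
    · exact G.loopless.irrefl x h
    · exact H.loopless.irrefl x h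

/-- Strong product of simple graphs. -/
def strongProd {V W : Type} (G : SimpleGraph V) (H : SimpleGraph W) :
    SimpleGraph (V × W) where
  Adj p q := p ≠ q ∧ (G.Adj p.1 q.1 ∨ p.1 = q.1) ∧ (H.Adj p.2 q.2 ∨ p.2 = q.2)
  symm := by
    refine ⟨?_⟩
    rintro p q ⟨hne, h1, h2⟩
    exact ⟨hne.symm, h1.imp (fun h => h.symm) (fun h => h.symm),
      h2.imp (fun h => h.symm) (fun h => h.symm)⟩
  loopless := ⟨fun p h => h.1 rfl⟩

/-- A spectral point of graphs: a normalized, additive, multiplicative,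
isomorphism-invariant graph parameter, monotone under cohomomorphisms
(homomorphisms between the complements). -/
structure GraphSpectralPoint where
  val : ∀ (V : Type) [Fintype V] [DecidableEq V], SimpleGraph V → ℝ
  nonneg : ∀ (V : Type) [Fintype V] [DecidableEq V] (G : SimpleGraph V), 0 ≤ val V G
  iso_inv : ∀ (V W : Type) [Fintype V] [DecidableEq V] [Fintype W] [DecidableEq W]
    (G : SimpleGraph V) (H : SimpleGraph W), Nonempty (G ≃g H) → val V G = val W H
  additive : ∀ (V W : Type) [Fintype V] [DecidableEq V] [Fintype W] [DecidableEq W]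
    (G : SimpleGraph V) (H : SimpleGraph W),
    val (V ⊕ W) (disjUnion G H) = val V G + val W H
  multiplicative : ∀ (V W : Type) [Fintype V] [DecidableEq V] [Fintype W] [DecidableEq W]
    (G : SimpleGraph V) (H : SimpleGraph W),
    val (V × W) (strongProd G H) = val V G * val W H
  normalized : val (Fin 1) ⊤ = 1
  monotone : ∀ (V W : Type) [Fintype V] [DecidableEq V] [Fintype W] [DecidableEq W]
    (G : SimpleGraph V) (H : SimpleGraph W), Nonempty (Hᶜ →g Gᶜ) → val W H ≤ val V G

/-- The extension `F_α` of a graph parameter `F` with exponent `α` is monotone under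
cohomomorphisms of noncommutative graphs of the form `⊕_{d=1}^r Ḡ_d ⊗ Q_d`
(the exponent `α` is admissible for `F`). -/
def MonotoneExt (F : ∀ (V : Type) [Fintype V] [DecidableEq V], SimpleGraph V → ℝ)
    (α : ℝ) : Prop :=
  ∀ (r s : ℕ) (V : Fin r → Type) (W : Fin s → Type)
    [∀ d, Fintype (V d)] [∀ d, DecidableEq (V d)]
    [∀ d, Fintype (W d)] [∀ d, DecidableEq (W d)]
    (G : ∀ d, SimpleGraph (V d)) (H : ∀ d, SimpleGraph (W d)),
    Cohom (bigSum H) (bigSum G) →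
    ∑ d : Fin s, F (W d) (H d) * ((d.1 + 1 : ℕ) : ℝ) ^ α ≤
      ∑ d : Fin r, F (V d) (G d) * ((d.1 + 1 : ℕ) : ℝ) ^ α

/-!
Compressing a Kraus operator of a cohomomorphism from `S ⊗ Q_q` to `ℂ|x⟩ ⊗ ℂ^d` for a vertex `x` of
`G_d` gives a matrix with `d` rows whose columns, for each basis vector of the first factor, are
orthogonal of equal norm. There are `q` of them, so all vanish when `d < q`: only the summands
with `q ≤ d` are used. Monotonicity of `F_α` thus gives `F(H) q^α ≤ ∑_{q ≤ d} F(G_d) d^α`, and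
multiplying by `q^(β - α) ≤ d^(β - α)` raises the exponent to `β`.

Monotonicity of `F_α` also forces `F` to be nonnegative, isomorphism invariant, and zero on graphs
without vertices. The summands with `d < q` can therefore be deleted by replacing their graphs with
graphs without vertices.
-/

section Compression

variable {l m m' n R : Type*}

lemma submatrix_mul_submatrix_of_injective [Fintype m] [Fintype m'] [NonUnitalNonAssocSemiring R]
    (A : Matrix l m R) (B : Matrix m n R) {φ : m' → m} (hφ : Function.Injective φ)
    (h : ∀ p ∉ Set.range φ, ∀ i j, A i p * B p j = 0) :
    A.submatrix id φ * B.submatrix φ id = A * B := by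
  ext i j
  exact Fintype.sum_of_injective φ hφ _ _ (fun p hp => h p hp i j) fun _ => rfl

lemma blockDiagonal'_submatrix_sigmaMap {ι : Type*} [DecidableEq ι] [Zero R] {m m' : ι → Type*}
    (M : ∀ i, Matrix (m i) (m i) R) (f : ∀ i, m' i → m i) :
    (blockDiagonal' M).submatrix (Sigma.map id f) (Sigma.map id f) =
      blockDiagonal' fun i => (M i).submatrix (f i) (f i) := by
  ext ⟨i, x⟩ ⟨j, y⟩
  obtain rfl | hij := eq_or_ne i j
  · simp only [submatrix_apply, Sigma.map, id, blockDiagonal'_apply_eq]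
  · simp only [submatrix_apply, Sigma.map, id, blockDiagonal'_apply_ne _ _ _ hij]

open scoped ComplexOrder in
lemma eq_zero_of_conjTranspose_mul_self_eq_smul_one {𝕜 : Type*} [RCLike 𝕜] [Fintype m] [Fintype n]
    [DecidableEq n] (hmn : Fintype.card m < Fintype.card n) (A : Matrix m n 𝕜) {c : 𝕜}
    (hA : Aᴴ * A = c • 1) : A = 0 := by
  rcases eq_or_ne c 0 with rfl | hc
  · rwa [zero_smul, conjTranspose_mul_self_eq_zero] at hA
  · have hunit : IsUnit (c • (1 : Matrix n n 𝕜)) := isUnit_one.smul (Units.mk0 c hc)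
    have hrank : A.rank = Fintype.card n := by
      rw [← rank_conjTranspose_mul_self, hA, rank_of_isUnit _ hunit]
    exact absurd (hrank ▸ A.rank_le_card_height) hmn.not_ge

lemma eq_zero_of_conjTranspose_mul_self_eq_kronecker_one {𝕜 : Type*} [RCLike 𝕜] [Fintype m]
    [Fintype n] [DecidableEq n] (hmn : Fintype.card m < Fintype.card n)
    (A : Matrix m (l × n) 𝕜) {C : Matrix l l 𝕜} (hA : Aᴴ * A = C ⊗ₖ (1 : Matrix n n 𝕜)) :
    A = 0 := by
  ext i ⟨y, b⟩
  have hcol : (A.submatrix id (Prod.mk y))ᴴ * A.submatrix id (Prod.mk y) = C y y • 1 := by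
    ext b b'
    exact congrFun (congrFun hA (y, b)) (y, b')
  exact congrFun (congrFun (eq_zero_of_conjTranspose_mul_self_eq_smul_one hmn _ hcol) i) b

end Compression

section Cohom

variable {A A' B B' : Type} [Fintype A] [DecidableEq A] [Fintype A'] [DecidableEq A']
  [Fintype B] [DecidableEq B] [Fintype B'] [DecidableEq B']
  {S : Submodule ℂ (Matrix A A ℂ)} {S' : Submodule ℂ (Matrix A' A' ℂ)}
  {T : Submodule ℂ (Matrix B B ℂ)} {T' : Submodule ℂ (Matrix B' B' ℂ)}

lemma Cohom.refl (S : Submodule ℂ (Matrix A A ℂ)) : Cohom S S :=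
  ⟨1, fun _ => 1, by simp, by simp⟩

lemma Cohom.of_isEmpty [IsEmpty B] (T : Submodule ℂ (Matrix B B ℂ))
    (S : Submodule ℂ (Matrix A A ℂ)) : Cohom T S :=
  ⟨0, Fin.elim0, Subsingleton.elim _ _, fun i => i.elim0⟩

lemma Cohom.submatrix_left (h : Cohom T S) {ψ : B' → B} (hψ : Function.Injective ψ)
    (hT : ∀ M ∈ T, M.submatrix ψ ψ ∈ T') : Cohom T' S := by
  obtain ⟨k, E, hE1, hE⟩ := h
  refine ⟨k, fun i => (E i).submatrix id ψ, ?_, fun i j M hM => hT _ (hE i j M hM)⟩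
  rw [← submatrix_one ψ hψ, ← hE1]
  ext s t
  simp only [Matrix.sum_apply, submatrix_apply]
  rfl

lemma Cohom.submatrix_right (h : Cohom T S) {φ : A' → A} (hφ : Function.Injective φ)
    (hsupp : ∀ E : Matrix A B ℂ, (∀ M ∈ S, Eᴴ * M * E ∈ T) → ∀ p ∉ Set.range φ, E p = 0)
    (hS : ∀ M' ∈ S', ∃ M ∈ S, M.submatrix φ φ = M') : Cohom T S' := by
  obtain ⟨k, E, hE1, hE⟩ := h
  have hzero (i : Fin k) (p : A) (hp : p ∉ Set.range φ) (t : B) : E i p t = 0 :=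
    congrFun (hsupp (E i) (hE i i) p hp) t
  refine ⟨k, fun i => (E i).submatrix φ id, ?_, fun i j M' hM' => ?_⟩
  · rw [← hE1]
    refine Finset.sum_congr rfl fun i _ => submatrix_mul_submatrix_of_injective (E i)ᴴ (E i) hφ ?_
    intro p hp s t
    rw [hzero i p hp t, mul_zero]
  · obtain ⟨M, hM, rfl⟩ := hS M' hM'
    have hcompress : ((E i).submatrix φ id)ᴴ * M.submatrix φ φ * (E j).submatrix φ id =
        (E i)ᴴ * M * E j := by
      have hleft : ((E i).submatrix φ id)ᴴ * M.submatrix φ φ = ((E i)ᴴ * M).submatrix id φ :=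
        submatrix_mul_submatrix_of_injective (E i)ᴴ (M.submatrix id φ) hφ fun p hp s t => by
          rw [conjTranspose_apply, hzero i p hp, star_zero, zero_mul]
      rw [hleft]
      refine submatrix_mul_submatrix_of_injective _ _ hφ fun p hp s t => ?_
      rw [hzero j p hp, mul_zero]
    exact hcompress ▸ hE i j M hM

end Cohom

section Membership

lemma mem_graphNC_iff {V : Type} [Fintype V] [DecidableEq V] {G : SimpleGraph V}
    {M : Matrix V V ℂ} :
    M ∈ graphNC G ↔ ∀ x y, ¬(G.Adj x y ∨ x = y) → M x y = 0 := by
  constructor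
  · intro hM x y hxy
    induction hM using Submodule.span_induction with
    | mem M hM =>
      obtain ⟨u, v, huv, rfl⟩ := hM
      exact single_apply_of_ne _ _ _ _ _ fun h => hxy (h.1 ▸ h.2 ▸ huv)
    | zero => rfl
    | add A B _ _ hA hB => rw [Matrix.add_apply, hA, hB, add_zero]
    | smul c A _ hA => rw [Matrix.smul_apply, hA, smul_zero]
  · intro hM
    rw [matrix_eq_sum_single M]
    refine Submodule.sum_mem _ fun x _ => Submodule.sum_mem _ fun y _ => ?_
    by_cases hxy : G.Adj x y ∨ x = y
    · rw [← mul_one (M x y), ← smul_eq_mul, ← smul_single]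
      exact Submodule.smul_mem _ _ (Submodule.subset_span ⟨x, y, hxy, rfl⟩)
    · rw [hM x y hxy, single_zero]
      exact Submodule.zero_mem _

lemma diagonal_mem_graphNC {V : Type} [Fintype V] [DecidableEq V] (G : SimpleGraph V)
    (w : V → ℂ) : diagonal w ∈ graphNC G :=
  mem_graphNC_iff.2 fun _ _ hxy => diagonal_apply_ne _ fun h => hxy (Or.inr h)

lemma submatrix_mem_graphNC {V V' : Type} [Fintype V] [DecidableEq V] [Fintype V']
    [DecidableEq V'] {G : SimpleGraph V} {G' : SimpleGraph V'} (e : G ↪g G')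
    {M : Matrix V' V' ℂ} (hM : M ∈ graphNC G') : M.submatrix e e ∈ graphNC G :=
  mem_graphNC_iff.2 fun x y hxy => mem_graphNC_iff.1 hM _ _ <| by
    rwa [e.map_adj_iff, e.injective.eq_iff]

lemma exists_mem_graphNC_submatrix_eq {V V' : Type} [Fintype V] [DecidableEq V] [Fintype V']
    [DecidableEq V'] {G : SimpleGraph V} {G' : SimpleGraph V'} (e : G ↪g G')
    {M : Matrix V V ℂ} (hM : M ∈ graphNC G) : ∃ M' ∈ graphNC G', M'.submatrix e e = M := by
  induction hM using Submodule.span_induction with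
  | mem M hM =>
    obtain ⟨x, y, hxy, rfl⟩ := hM
    refine ⟨single (e x) (e y) 1, Submodule.subset_span ⟨e x, e y, ?_, rfl⟩, ?_⟩
    · rwa [e.map_adj_iff, e.injective.eq_iff]
    · ext u v
      simp only [submatrix_apply, single_apply, e.injective.eq_iff]
  | zero => exact ⟨0, Submodule.zero_mem _, rfl⟩
  | add A B _ _ hA hB =>
    obtain ⟨A', hA', rfl⟩ := hA
    obtain ⟨B', hB', rfl⟩ := hB
    exact ⟨A' + B', Submodule.add_mem _ hA' hB', rfl⟩
  | smul c A _ hA =>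
    obtain ⟨A', hA', rfl⟩ := hA
    exact ⟨c • A', Submodule.smul_mem _ c hA', rfl⟩

lemma mem_ncTensor_qGraph_iff {V : Type} [Fintype V] [DecidableEq V]
    {S : Submodule ℂ (Matrix V V ℂ)} {n : ℕ} {M : Matrix (V × Fin n) (V × Fin n) ℂ} :
    M ∈ ncTensor S (qGraph n) ↔ ∃ C ∈ S, C ⊗ₖ (1 : Matrix (Fin n) (Fin n) ℂ) = M := by
  constructor
  · intro hM
    induction hM using Submodule.span_induction with
    | mem M hM =>
      obtain ⟨X, hX, Y, hY, rfl⟩ := hM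
      obtain ⟨c, rfl⟩ := Submodule.mem_span_singleton.1 hY
      exact ⟨c • X, S.smul_mem c hX, by rw [kronecker_smul, smul_kronecker]⟩
    | zero => exact ⟨0, S.zero_mem, zero_kronecker _⟩
    | add A B _ _ hA hB =>
      obtain ⟨C, hC, rfl⟩ := hA
      obtain ⟨D, hD, rfl⟩ := hB
      exact ⟨C + D, S.add_mem hC hD, add_kronecker ..⟩
    | smul c A _ hA =>
      obtain ⟨C, hC, rfl⟩ := hA
      exact ⟨c • C, S.smul_mem c hC, smul_kronecker ..⟩
  · rintro ⟨C, hC, rfl⟩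
    exact Submodule.subset_span ⟨C, hC, 1, Submodule.mem_span_singleton_self _, rfl⟩

lemma mem_ncDirectSum_iff {ι : Type} [Fintype ι] [DecidableEq ι] {V : ι → Type}
    [∀ i, Fintype (V i)] [∀ i, DecidableEq (V i)] {S : ∀ i, Submodule ℂ (Matrix (V i) (V i) ℂ)}
    {M : Matrix (Σ i, V i) (Σ i, V i) ℂ} :
    M ∈ ncDirectSum S ↔ ∃ C : ∀ i, Matrix (V i) (V i) ℂ, (∀ i, C i ∈ S i) ∧
      blockDiagonal' C = M := by
  constructor
  · rintro ⟨hoff, hdiag⟩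
    refine ⟨_, hdiag, ?_⟩
    ext ⟨i, x⟩ ⟨j, y⟩
    obtain rfl | hij := eq_or_ne i j
    · exact blockDiagonal'_apply_eq _ i x y
    · rw [blockDiagonal'_apply_ne _ x y hij, hoff ⟨i, x⟩ ⟨j, y⟩ hij]
  · rintro ⟨C, hC, rfl⟩
    refine ⟨fun p q hpq => blockDiagonal'_apply_ne C p.2 q.2 hpq, fun i => ?_⟩
    convert hC i using 1
    ext x y
    exact blockDiagonal'_apply_eq C i x y

variable {r : ℕ} {V V' : Fin r → Type} {G : ∀ d, SimpleGraph (V d)} {G' : ∀ d, SimpleGraph (V' d)}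

/-- The map induced by graph embeddings `G d ↪g G' d` between the index sets of `bigSum G` and
`bigSum G'`. -/
def bigSumEmbedding (e : ∀ d, G d ↪g G' d) :
    (Σ d : Fin r, V d × Fin (d.1 + 1)) ↪ Σ d : Fin r, V' d × Fin (d.1 + 1) :=
  .sigmaMap (.refl _) fun d => (e d).toEmbedding.prodMap (.refl _)

lemma blockDiagonal'_kronecker_submatrix_bigSumEmbedding (e : ∀ d, G d ↪g G' d)
    (C : ∀ d, Matrix (V' d) (V' d) ℂ) :
    (blockDiagonal' fun d => C d ⊗ₖ (1 : Matrix (Fin (d.1 + 1)) (Fin (d.1 + 1)) ℂ)).submatrix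
        (bigSumEmbedding e) (bigSumEmbedding e) =
      blockDiagonal' fun d => (C d).submatrix (e d) (e d) ⊗ₖ 1 :=
  blockDiagonal'_submatrix_sigmaMap _ fun d => Prod.map (e d) id

variable [∀ d, Fintype (V d)] [∀ d, DecidableEq (V d)]
  [∀ d, Fintype (V' d)] [∀ d, DecidableEq (V' d)]

lemma mem_bigSum_iff {M : Matrix (Σ d : Fin r, V d × Fin (d.1 + 1))
      (Σ d : Fin r, V d × Fin (d.1 + 1)) ℂ} :
    M ∈ bigSum G ↔ ∃ C : ∀ d, Matrix (V d) (V d) ℂ, (∀ d, C d ∈ graphNC (G d)) ∧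
      blockDiagonal' (fun d => C d ⊗ₖ (1 : Matrix (Fin (d.1 + 1)) (Fin (d.1 + 1)) ℂ)) = M := by
  rw [bigSum, mem_ncDirectSum_iff]
  simp only [mem_ncTensor_qGraph_iff]
  constructor
  · rintro ⟨D, hD, rfl⟩
    choose C hC hCD using hD
    exact ⟨C, hC, congrArg blockDiagonal' (funext hCD)⟩
  · rintro ⟨C, hC, rfl⟩
    exact ⟨_, fun d => ⟨C d, hC d, rfl⟩, rfl⟩

lemma diagonal_mem_bigSum (G : ∀ d, SimpleGraph (V d)) (w : (Σ d, V d) → ℂ) :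
    diagonal (fun p : Σ d : Fin r, V d × Fin (d.1 + 1) => w ⟨p.1, p.2.1⟩) ∈ bigSum G := by
  refine mem_bigSum_iff.2 ⟨_, fun d => diagonal_mem_graphNC (G d) fun x => w ⟨d, x⟩, ?_⟩
  simp only [← diagonal_one, diagonal_kronecker_diagonal, mul_one, blockDiagonal'_diagonal]

lemma submatrix_mem_bigSum (e : ∀ d, G d ↪g G' d)
    {M : Matrix (Σ d : Fin r, V' d × Fin (d.1 + 1)) (Σ d : Fin r, V' d × Fin (d.1 + 1)) ℂ}
    (hM : M ∈ bigSum G') :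
    M.submatrix (bigSumEmbedding e) (bigSumEmbedding e) ∈ bigSum G := by
  obtain ⟨C, hC, rfl⟩ := mem_bigSum_iff.1 hM
  exact mem_bigSum_iff.2 ⟨_, fun d => submatrix_mem_graphNC (e d) (hC d),
    (blockDiagonal'_kronecker_submatrix_bigSumEmbedding e C).symm⟩

lemma exists_mem_bigSum_submatrix_eq (e : ∀ d, G d ↪g G' d)
    {M : Matrix (Σ d : Fin r, V d × Fin (d.1 + 1)) (Σ d : Fin r, V d × Fin (d.1 + 1)) ℂ}
    (hM : M ∈ bigSum G) :
    ∃ M' ∈ bigSum G', M'.submatrix (bigSumEmbedding e) (bigSumEmbedding e) = M := by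
  obtain ⟨C, hC, rfl⟩ := mem_bigSum_iff.1 hM
  choose C' hC' hC'C using fun d => exists_mem_graphNC_submatrix_eq (e d) (hC d)
  refine ⟨_, mem_bigSum_iff.2 ⟨C', hC', rfl⟩, ?_⟩
  simp only [blockDiagonal'_kronecker_submatrix_bigSumEmbedding, hC'C]

lemma cohom_bigSum_of_embedding (e : ∀ d, G d ↪g G' d) : Cohom (bigSum G) (bigSum G') :=
  (Cohom.refl _).submatrix_left (bigSumEmbedding e).injective fun _ => submatrix_mem_bigSum e

end Membership

section Restriction

variable {r : ℕ} {V : Fin r → Type}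

/-- The family of graphs obtained from `G` by deleting all vertices of the members at indices not
satisfying `P`, which removes the corresponding summands from `bigSum G`. -/
def restrictFamily (P : Fin r → Prop) (G : ∀ d, SimpleGraph (V d)) (d : Fin r) :
    SimpleGraph {_x : V d // P d} :=
  (G d).comap Subtype.val

/-- The inclusion of the `d`-th graph of the restricted family into `G d`. -/
def restrictFamilyEmbedding (P : Fin r → Prop) (G : ∀ d, SimpleGraph (V d)) (d : Fin r) :
    restrictFamily P G d ↪g G d :=
  .comap (.subtype _) (G d)

variable [∀ d, Fintype (V d)] [∀ d, DecidableEq (V d)] {G : ∀ d, SimpleGraph (V d)}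

lemma kraus_apply_eq_zero_of_lt {U : Type} [Fintype U] [DecidableEq U]
    {S : Submodule ℂ (Matrix U U ℂ)} {q : ℕ}
    {E : Matrix (Σ d : Fin r, V d × Fin (d.1 + 1)) (U × Fin q) ℂ}
    (hE : ∀ M ∈ bigSum G, Eᴴ * M * E ∈ ncTensor S (qGraph q))
    {p : Σ d : Fin r, V d × Fin (d.1 + 1)} (hp : p.1.1 + 1 < q) : E p = 0 := by
  obtain ⟨d, x, a⟩ := p
  let row (a : Fin (d.1 + 1)) : Σ d : Fin r, V d × Fin (d.1 + 1) := ⟨d, x, a⟩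
  have hrow : Function.Injective row := fun a b hab => by simpa [row] using hab
  let w : (Σ d, V d) → ℂ := Pi.single ⟨d, x⟩ 1
  let P := diagonal fun p : Σ d : Fin r, V d × Fin (d.1 + 1) => w ⟨p.1, p.2.1⟩
  have hw (p) (hp : p ∉ Set.range row) : w ⟨p.1, p.2.1⟩ = 0 := by
    refine Pi.single_eq_of_ne (fun h => hp ?_) _
    obtain ⟨d', x', a'⟩ := p
    cases h
    exact ⟨a', rfl⟩
  have hblock : (E.submatrix row id)ᴴ * E.submatrix row id = Eᴴ * P * E := by
    have hP : (P * E).submatrix row id = E.submatrix row id := by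
      ext a t
      simp [P, w, row, diagonal_mul]
    rw [Matrix.mul_assoc, ← submatrix_mul_submatrix_of_injective Eᴴ (P * E) hrow, hP]
    · rfl
    · intro p hp s t
      rw [diagonal_mul, hw p hp, zero_mul, mul_zero]
  obtain ⟨C, -, hC⟩ := mem_ncTensor_qGraph_iff.1 (hE P (diagonal_mem_bigSum G w))
  have hzero : E.submatrix row id = 0 :=
    eq_zero_of_conjTranspose_mul_self_eq_kronecker_one (by simpa using hp) _ (hblock.trans hC.symm)
  exact congrFun hzero a

lemma Cohom.bigSum_restrictFamily_le {U : Type} [Fintype U] [DecidableEq U]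
    {S : Submodule ℂ (Matrix U U ℂ)} {q : ℕ} (h : Cohom (ncTensor S (qGraph q)) (bigSum G)) :
    Cohom (ncTensor S (qGraph q)) (bigSum (restrictFamily (fun d => q ≤ d.1 + 1) G)) := by
  let e := restrictFamilyEmbedding (fun d : Fin r => q ≤ d.1 + 1) G
  refine h.submatrix_right (bigSumEmbedding e).injective (fun E hE p hp => ?_) fun _ =>
    exists_mem_bigSum_submatrix_eq e
  refine kraus_apply_eq_zero_of_lt hE (not_le.1 fun hq => hp ?_)
  exact ⟨⟨p.1, ⟨p.2.1, hq⟩, p.2.2⟩, rfl⟩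

lemma Cohom.bigSum_restrictFamily_last {U : Type} [Fintype U] [DecidableEq U]
    {H : SimpleGraph U} {n : ℕ} {A : Type} [Fintype A] [DecidableEq A]
    {S : Submodule ℂ (Matrix A A ℂ)} (h : Cohom (ncTensor (graphNC H) (qGraph (n + 1))) S) :
    Cohom (bigSum (restrictFamily (· = Fin.last n) fun _ => H)) S := by
  let ψ : (Σ d : Fin (n + 1), {_x : U // d = Fin.last n} × Fin (d.1 + 1)) → U × Fin (n + 1) :=
    fun p => (p.2.1, p.2.2.castLE p.1.2)
  have hψ : Function.Injective ψ := by
    rintro ⟨d, ⟨x, rfl⟩, a⟩ ⟨d', ⟨y, rfl⟩, b⟩ hab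
    simpa [ψ] using hab
  refine h.submatrix_left hψ fun M hM => ?_
  obtain ⟨C, hC, rfl⟩ := mem_ncTensor_qGraph_iff.1 hM
  refine mem_bigSum_iff.2 ⟨_, fun d =>
    submatrix_mem_graphNC (restrictFamilyEmbedding (· = Fin.last n) (fun _ => H) d) hC, ?_⟩
  ext ⟨d, ⟨x, rfl⟩, a⟩ ⟨d', ⟨y, rfl⟩, b⟩
  exact blockDiagonal'_apply_eq ..

end Restriction

namespace MonotoneExt

variable {F : ∀ (V : Type) [Fintype V] [DecidableEq V], SimpleGraph V → ℝ} {α : ℝ}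

lemma le_of_cohom (hF : MonotoneExt F α) {V W : Type} [Fintype V] [DecidableEq V]
    [Fintype W] [DecidableEq W] {G : SimpleGraph V} {H : SimpleGraph W}
    (h : Cohom (bigSum fun _ : Fin 1 => H) (bigSum fun _ : Fin 1 => G)) : F W H ≤ F V G := by
  simpa using hF 1 1 (fun _ => V) (fun _ => W) (fun _ => G) (fun _ => H) h

lemma eq_of_iso (hF : MonotoneExt F α) {V W : Type} [Fintype V] [DecidableEq V]
    [Fintype W] [DecidableEq W] {G : SimpleGraph V} {H : SimpleGraph W} (e : G ≃g H) :
    F V G = F W H :=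
  (hF.le_of_cohom (cohom_bigSum_of_embedding fun _ => e.toEmbedding)).antisymm
    (hF.le_of_cohom (cohom_bigSum_of_embedding fun _ => e.symm.toEmbedding))

lemma nonneg (hF : MonotoneExt F α) {V : Type} [Fintype V] [DecidableEq V] (G : SimpleGraph V) :
    0 ≤ F V G := by
  simpa using hF 1 0 (fun _ => V) (fun _ => Empty) (fun _ => G) (fun _ => ⊥) (Cohom.of_isEmpty _ _)

lemma eq_zero_of_isEmpty (hF : MonotoneExt F α) {V : Type} [Fintype V] [DecidableEq V] [IsEmpty V]
    (G : SimpleGraph V) : F V G = 0 := by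
  have : IsEmpty (Σ d : Fin 1, V × Fin (d.1 + 1)) := ⟨fun p => isEmptyElim p.2.1⟩
  refine le_antisymm ?_ (hF.nonneg G)
  simpa using hF 0 1 (fun _ => Empty) (fun _ => V) (fun _ => ⊥) (fun _ => G) (Cohom.of_isEmpty _ _)

lemma sum_restrictFamily (hF : MonotoneExt F α) {r : ℕ} {V : Fin r → Type} [∀ d, Fintype (V d)]
    [∀ d, DecidableEq (V d)] (P : Fin r → Prop) [DecidablePred P] (G : ∀ d, SimpleGraph (V d))
    (w : Fin r → ℝ) :
    ∑ d, F _ (restrictFamily P G d) * w d = ∑ d with P d, F (V d) (G d) * w d := by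
  rw [Finset.sum_filter]
  refine Finset.sum_congr rfl fun d _ => ?_
  split_ifs with hd
  · have e : restrictFamily P G d ≃g G d := ⟨Equiv.subtypeUnivEquiv fun _ => hd, Iff.rfl⟩
    rw [hF.eq_of_iso e]
  · have : IsEmpty {_x : V d // P d} := ⟨fun x => hd x.2⟩
    rw [hF.eq_zero_of_isEmpty, zero_mul]

lemma mul_rpow_le_sum (hF : MonotoneExt F α) {r : ℕ} {V : Fin r → Type} [∀ d, Fintype (V d)]
    [∀ d, DecidableEq (V d)] {G : ∀ d, SimpleGraph (V d)} {U : Type} [Fintype U] [DecidableEq U]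
    {H : SimpleGraph U} {q : ℕ} (hq : 1 ≤ q)
    (h : Cohom (ncTensor (graphNC H) (qGraph q)) (bigSum G)) :
    F U H * (q : ℝ) ^ α ≤ ∑ d : Fin r, F (V d) (G d) * ((d.1 + 1 : ℕ) : ℝ) ^ α := by
  obtain ⟨n, rfl⟩ := Nat.exists_eq_add_of_le' hq
  have hsum := hF _ _ _ _ _ _ (h.bigSum_restrictFamily_last)
  rw [hF.sum_restrictFamily, Finset.filter_eq', if_pos (Finset.mem_univ _),
    Finset.sum_singleton] at hsum
  exact hsum

end MonotoneExt

lemma mul_rpow_le_sum_of_exponent_le {ι : Type*} {s : Finset ι} {a q α β : ℝ} {c x : ι → ℝ}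
    (hαβ : α ≤ β) (hq : 0 < q) (hc : ∀ i ∈ s, 0 ≤ c i) (hx : ∀ i ∈ s, q ≤ x i)
    (h : a * q ^ α ≤ ∑ i ∈ s, c i * x i ^ α) : a * q ^ β ≤ ∑ i ∈ s, c i * x i ^ β := by
  have hsplit {y : ℝ} (hy : 0 < y) : y ^ β = y ^ α * y ^ (β - α) := by
    rw [← Real.rpow_add hy, add_sub_cancel]
  calc a * q ^ β = a * q ^ α * q ^ (β - α) := by rw [hsplit hq, mul_assoc]
    _ ≤ (∑ i ∈ s, c i * x i ^ α) * q ^ (β - α) := by gcongr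
    _ = ∑ i ∈ s, c i * x i ^ α * q ^ (β - α) := Finset.sum_mul ..
    _ ≤ ∑ i ∈ s, c i * x i ^ β := by
      refine Finset.sum_le_sum fun i hi => ?_
      have hxi : 0 < x i := hq.trans_le (hx i hi)
      rw [hsplit hxi, ← mul_assoc]
      exact mul_le_mul_of_nonneg_left
        (Real.rpow_le_rpow hq.le (hx i hi) (sub_nonneg.2 hαβ))
        (mul_nonneg (hc i hi) (Real.rpow_nonneg hxi.le α))

theorem single_term_monotone_for_larger_exponent_general
    {F : ∀ (V : Type) [Fintype V] [DecidableEq V], SimpleGraph V → ℝ} {α β : ℝ}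
    (hαβ : α ≤ β) (hF : MonotoneExt F α)
    {r : ℕ} {V : Fin r → Type} [∀ d, Fintype (V d)] [∀ d, DecidableEq (V d)]
    {G : ∀ d, SimpleGraph (V d)} {U : Type} [Fintype U] [DecidableEq U] {H : SimpleGraph U}
    {q : ℕ} (hq : 1 ≤ q) (h : Cohom (ncTensor (graphNC H) (qGraph q)) (bigSum G)) :
    F U H * (q : ℝ) ^ β ≤ ∑ d : Fin r, F (V d) (G d) * ((d.1 + 1 : ℕ) : ℝ) ^ β := by
  have hα : F U H * (q : ℝ) ^ α ≤
      ∑ d : Fin r with q ≤ d.1 + 1, F (V d) (G d) * ((d.1 + 1 : ℕ) : ℝ) ^ α := by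
    rw [← hF.sum_restrictFamily]
    exact hF.mul_rpow_le_sum hq h.bigSum_restrictFamily_le
  calc F U H * (q : ℝ) ^ β
      ≤ ∑ d : Fin r with q ≤ d.1 + 1, F (V d) (G d) * ((d.1 + 1 : ℕ) : ℝ) ^ β :=
        mul_rpow_le_sum_of_exponent_le hαβ (by exact_mod_cast hq) (fun d _ => hF.nonneg (G d))
          (fun d hd => by exact_mod_cast (Finset.mem_filter.1 hd).2) hα
    _ ≤ ∑ d : Fin r, F (V d) (G d) * ((d.1 + 1 : ℕ) : ℝ) ^ β :=
        Finset.sum_le_univ_sum_of_nonneg fun d => mul_nonneg (hF.nonneg (G d)) (by positivity)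

theorem single_term_monotone_for_larger_exponent (f : GraphSpectralPoint) {α β : ℝ}
    (hαβ : α ≤ β) (hadm : MonotoneExt f.val α)
    {r : ℕ} {V : Fin r → Type} [∀ d, Fintype (V d)] [∀ d, DecidableEq (V d)]
    (G : ∀ d, SimpleGraph (V d))
    {VH : Type} [Fintype VH] [DecidableEq VH] (H : SimpleGraph VH)
    (q : ℕ) (hq : 1 ≤ q)
    (h : Cohom (ncTensor (graphNC H) (qGraph q)) (bigSum G)) :
    f.val VH H * (q : ℝ) ^ β ≤ ∑ d : Fin r, f.val (V d) (G d) * ((d.1 + 1 : ℕ) : ℝ) ^ β :=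
  single_term_monotone_for_larger_exponent_general hαβ hadm hq h

end NCG
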